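/- Let n ≥ 1 and let P, Q ∈ ℂ[X] be coprime monic polynomials of degree n, and set R = P − Q. Let p and q denote the numbers of distinct complex roots of P and Q respectively. Then deg R = (n + 1) − (p + q) if and only if both of the following hold: (a) R is squarefree, and (b) for every y ∈ ℂ with y ≠ 0 and y ≠ 1, the polynomial (1 − y)·P + y·Q is squarefree. -/

import Mathlib

open Polynomial

lemma aux_sqf (S : ℂ[X]) :
    Squarefree S ↔ ∀ a : ℂ, S.eval a = 0 → (derivative S).eval a ≠ 0 := by
  rw [← PerfectField.separable_iff_squarefree]
  constructor
  · intro h a h0 h1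
    obtain ⟨u, v, huv⟩ := h
    have := congrArg (eval a) huv
    simp [h0, h1] at this
  · intro h
    by_contra hc
    have : ¬ IsCoprime S (derivative S) := hc
    rw [← EuclideanDomain.gcd_isUnit_iff] at this
    have hd : (EuclideanDomain.gcd S (derivative S)).degree ≠ 0 := by
      intro hd
      exact this (isUnit_iff_degree_eq_zero.2 hd)
    obtain ⟨a, ha⟩ := IsAlgClosed.exists_root _ hd
    have h1 : S.eval a = 0 := by
      exact eval_eq_zero_of_dvd_of_eval_eq_zero (EuclideanDomain.gcd_dvd_left _ _) ha
    have h2 : (derivative S).eval a = 0 := by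
      exact eval_eq_zero_of_dvd_of_eval_eq_zero (EuclideanDomain.gcd_dvd_right _ _) ha
    exact h a h1 h2

lemma aux_mult (P Q : ℂ[X]) (hP : P ≠ 0) (a : ℂ) (ha : P.eval a = 0) (hQ : Q.eval a ≠ 0) :
    (derivative P * Q - P * derivative Q).roots.count a + 1 = P.roots.count a := by
  rw [count_roots, count_roots]
  obtain ⟨U, hU, hnd⟩ := exists_eq_pow_rootMultiplicity_mul_and_not_dvd P hP a
  have hpos : 0 < P.rootMultiplicity a := (rootMultiplicity_pos hP).2 ha
  obtain ⟨m, hm⟩ : ∃ m, P.rootMultiplicity a = m + 1 := ⟨_, (Nat.succ_pred_eq_of_pos hpos).symm⟩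
  rw [hm] at hU ⊢
  have hUa : U.eval a ≠ 0 := fun h => hnd (dvd_iff_isRoot.2 h)
  set V : ℂ[X] := C ((m : ℂ) + 1) * U * Q + (X - C a) * (derivative U * Q - U * derivative Q) with hV
  have hVa : V.eval a ≠ 0 := by
    have : (m : ℂ) + 1 ≠ 0 := by exact_mod_cast Nat.succ_ne_zero m
    simp [hV, this, hUa, hQ]
  have hW : derivative P * Q - P * derivative Q = (X - C a) ^ m * V := by
    rw [hU, hV]
    simp only [derivative_mul, derivative_pow, derivative_sub, derivative_X, derivative_C]
    simp only [Nat.cast_add, Nat.cast_one, map_add, map_natCast, map_one, Nat.add_sub_cancel]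
    ring
  have hV0 : V ≠ 0 := by rintro h; simp [h] at hVa
  have hX : (X - C a) ^ m ≠ 0 := pow_ne_zero _ (X_sub_C_ne_zero a)
  rw [hW, rootMultiplicity_mul (mul_ne_zero hX hV0), rootMultiplicity_X_sub_C_pow,
    rootMultiplicity_eq_zero hVa, add_zero]

lemma aux_deg (P R : ℂ[X]) (hR : R ≠ 0) (h : R.natDegree < P.natDegree) (hP : P.Monic) :
    P * derivative R - derivative P * R ≠ 0 ∧
    (P * derivative R - derivative P * R).natDegree + 1 = P.natDegree + R.natDegree := by
  set n := P.natDegree with hn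
  set r := R.natDegree with hr
  obtain ⟨k, hk⟩ : ∃ k, n = k + 1 := ⟨n - 1, by omega⟩
  have hl : R.coeff r ≠ 0 := by simpa [hr] using hR
  have hc2 : (derivative P * R).coeff (k + r) = n * R.coeff r := by
    rw [coeff_mul_add_eq_of_natDegree_le (by have := natDegree_derivative_le P; omega) le_rfl,
      coeff_derivative]
    have : P.coeff (k + 1) = 1 := by rw [← hk, hn]; exact hP
    rw [this, hk]; push_cast; ring
  have hc1 : (P * derivative R).coeff (k + r) = r * R.coeff r := by
    rcases Nat.eq_zero_or_pos r with h0 | h0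
    · have : derivative R = 0 := by
        rw [eq_C_of_natDegree_eq_zero (hr ▸ h0 : R.natDegree = 0)]; simp
      simp [this, h0]
    · obtain ⟨j, hj⟩ : ∃ j, r = j + 1 := ⟨r - 1, by omega⟩
      have e : k + r = n + j := by omega
      rw [e, coeff_mul_add_eq_of_natDegree_le le_rfl (by have := natDegree_derivative_le R; omega),
        coeff_derivative]
      have : P.coeff n = 1 := hP
      rw [this, hj]; push_cast; ring
  have hc : (P * derivative R - derivative P * R).coeff (k + r) ≠ 0 := by
    rw [coeff_sub, hc1, hc2, ← sub_mul]
    refine mul_ne_zero (sub_ne_zero.2 ?_) hl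
    exact_mod_cast h.ne
  refine ⟨fun h0 => by simp [h0] at hc, ?_⟩
  have hle : (P * derivative R - derivative P * R).natDegree ≤ k + r := by
    refine (natDegree_sub_le _ _).trans (max_le ?_ ?_)
    · rcases Nat.eq_zero_or_pos r with h0 | h0
      · have : derivative R = 0 := by
          rw [eq_C_of_natDegree_eq_zero (hr ▸ h0 : R.natDegree = 0)]; simp
        simp [this]
      · have h1 := natDegree_mul_le (p := P) (q := derivative R)
        have := natDegree_derivative_le R
        omega
    · have h1 := natDegree_mul_le (p := derivative P) (q := R)
      have := natDegree_derivative_le P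
      omega
  have := le_antisymm hle (le_natDegree_of_ne_zero hc)
  omega

theorem aux_count (n : ℕ) (hn : 1 ≤ n) (P Q : ℂ[X])
    (hcop : ∀ a, P.eval a = 0 → Q.eval a ≠ 0) (hPm : P.Monic) (hQm : Q.Monic)
    (hP : P.natDegree = n) (hQ : Q.natDegree = n) :
    (((P - Q).natDegree : ℤ)
        = (n + 1 : ℤ) - ((P.roots.toFinset.card : ℤ) + (Q.roots.toFinset.card : ℤ))) ↔
      ∀ a, P.eval a ≠ 0 → Q.eval a ≠ 0 → (derivative P * Q - P * derivative Q).eval a ≠ 0 := by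
  have hP0 := hPm.ne_zero
  have hQ0 := hQm.ne_zero
  have hR0 : P - Q ≠ 0 := by
    intro h
    obtain ⟨a, ha⟩ := IsAlgClosed.exists_root P (by
      rw [degree_eq_natDegree hP0, hP]; exact_mod_cast (by omega : n ≠ 0))
    exact hcop a ha (by rw [← sub_eq_zero.1 h]; exact ha)
  have hRd : (P - Q).natDegree < P.natDegree := by
    refine natDegree_lt_natDegree hR0 (degree_sub_lt ?_ hP0 ?_)
    · rw [degree_eq_natDegree hP0, degree_eq_natDegree hQ0, hP, hQ]
    · rw [hPm.leadingCoeff, hQm.leadingCoeff]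
  obtain ⟨hW0, hWd⟩ := aux_deg P (P - Q) hR0 hRd hPm
  have hWe : P * derivative (P - Q) - derivative P * (P - Q)
      = derivative P * Q - P * derivative Q := by
    rw [derivative_sub]; ring
  rw [hWe] at hW0 hWd
  set W := derivative P * Q - P * derivative Q with hW
  have m1 : ∀ a ∈ P.roots.toFinset, W.roots.count a + 1 = P.roots.count a := by
    intro a ha
    have ha : P.eval a = 0 := by simpa [hP0] using ha
    exact aux_mult P Q hP0 a ha (hcop a ha)
  have m2 : ∀ a ∈ Q.roots.toFinset, W.roots.count a + 1 = Q.roots.count a := by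
    intro a ha
    have ha : Q.eval a = 0 := by simpa [hQ0] using ha
    have := aux_mult Q P hQ0 a ha (fun h => hcop a h ha)
    rw [← this, ← roots_neg W, hW]
    congr 3
    ring
  have s1 : ∑ a ∈ P.roots.toFinset, W.roots.count a + P.roots.toFinset.card = n := by
    rw [← hP, ← splits_iff_card_roots.1 (IsAlgClosed.splits P), ← Multiset.toFinset_sum_count_eq,
      ← Finset.sum_congr rfl m1, Finset.sum_add_distrib]
    simp
  have s2 : ∑ a ∈ Q.roots.toFinset, W.roots.count a + Q.roots.toFinset.card = n := by
    rw [← hQ, ← splits_iff_card_roots.1 (IsAlgClosed.splits Q), ← Multiset.toFinset_sum_count_eq,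
      ← Finset.sum_congr rfl m2, Finset.sum_add_distrib]
    simp
  have hdis : Disjoint P.roots.toFinset Q.roots.toFinset := by
    rw [Finset.disjoint_left]
    intro a ha hb
    exact hcop a (by simpa [hP0] using ha) (by simpa [hQ0] using hb)
  set S := P.roots.toFinset ∪ Q.roots.toFinset with hS
  have sS : ∑ a ∈ S, W.roots.count a = ∑ a ∈ P.roots.toFinset, W.roots.count a +
      ∑ a ∈ Q.roots.toFinset, W.roots.count a := Finset.sum_union hdis
  have sT : ∑ a ∈ W.roots.toFinset ∪ S, W.roots.count a = W.natDegree := by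
    rw [← splits_iff_card_roots.1 (IsAlgClosed.splits W)]
    exact Multiset.sum_count_eq_card (fun a ha => by simp [Multiset.mem_toFinset.2 ha] <;> tauto)
  have sU := Finset.sum_sdiff (f := fun a => W.roots.count a)
    (Finset.subset_union_right : S ⊆ W.roots.toFinset ∪ S)
  have key : (((P - Q).natDegree : ℤ)
        = (n + 1 : ℤ) - ((P.roots.toFinset.card : ℤ) + (Q.roots.toFinset.card : ℤ))) ↔
      ∑ a ∈ (W.roots.toFinset ∪ S) \ S, W.roots.count a = 0 := by
    beta_reduce at sU
    omega
  rw [key, Finset.sum_eq_zero_iff]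
  constructor
  · intro h a h1 h2 h3
    have hm : a ∈ W.roots := by simpa [hW0] using h3
    have := h a (by
      rw [Finset.mem_sdiff, hS]
      refine ⟨Finset.mem_union_left _ (by simpa using hm), ?_⟩
      simp [hP0, hQ0, h1, h2])
    exact (Multiset.count_pos.2 hm).ne' this
  · intro h a ha
    rw [Finset.mem_sdiff, hS, Finset.mem_union (s := P.roots.toFinset), not_or] at ha
    rw [Multiset.count_eq_zero]
    intro hm
    exact h a (by simpa [hP0] using ha.2.1) (by simpa [hQ0] using ha.2.2)
      (by simpa [hW0] using hm)

/-- For coprime monic `P, Q` of degree `n`, the difference `R = P - Q` has the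
minimal possible degree `(n + 1) - (p + q)` iff `R` is squarefree and every
combination `(1 - y)·P + y·Q` (for `y ≠ 0, 1`) is squarefree. -/
theorem stmt2 (n : ℕ) (hn : 1 ≤ n) (P Q : ℂ[X])
    (hcop : IsCoprime P Q) (hPm : P.Monic) (hQm : Q.Monic)
    (hP : P.natDegree = n) (hQ : Q.natDegree = n) :
    (((P - Q).natDegree : ℤ)
        = (n + 1 : ℤ) - ((P.roots.toFinset.card : ℤ) + (Q.roots.toFinset.card : ℤ))) ↔
      (Squarefree (P - Q) ∧
        ∀ y : ℂ, y ≠ 0 → y ≠ 1 → Squarefree ((1 - C y) * P + C y * Q)) := by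
  have hcop' : ∀ a, P.eval a = 0 → Q.eval a ≠ 0 := by
    intro a h0 h1
    obtain ⟨u, v, huv⟩ := hcop
    have := congrArg (eval a) huv
    simp [h0, h1] at this
  rw [aux_count n hn P Q hcop' hPm hQm hP hQ]
  simp only [aux_sqf]
  have e : ∀ y : ℂ, derivative ((1 - C y) * P + C y * Q)
      = (1 - C y) * derivative P + C y * derivative Q := by
    intro y; simp [derivative_mul]
  simp only [e, derivative_sub, eval_sub, eval_mul, eval_add, eval_C, eval_one]
  constructor
  · intro h
    constructor
    · intro a h0 h1
      have hPQ : P.eval a = Q.eval a := sub_eq_zero.1 h0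
      have hPa : P.eval a ≠ 0 := fun hz => hcop' a hz (hPQ ▸ hz)
      exact h a hPa (hPQ ▸ hPa) (by rw [← hPQ]; linear_combination P.eval a * h1)
    · intro y hy0 hy1 a h0 h1
      have hy1' : 1 - y ≠ 0 := sub_ne_zero.2 (Ne.symm hy1)
      have hPa : P.eval a ≠ 0 := by
        intro hz
        rw [hz, mul_zero, zero_add] at h0
        exact hcop' a hz ((mul_eq_zero.1 h0).resolve_left hy0)
      have hQa : Q.eval a ≠ 0 := by
        intro hz
        rw [hz, mul_zero, add_zero] at h0
        exact hPa ((mul_eq_zero.1 h0).resolve_left hy1')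
      refine h a hPa hQa ?_
      apply (mul_eq_zero.1 (?_ : (1 - y) * _ = 0)).resolve_left hy1'
      linear_combination Q.eval a * h1 - (derivative Q).eval a * h0
  · rintro ⟨h1, h2⟩ a hPa hQa hw
    by_cases hR : P.eval a - Q.eval a = 0
    · refine h1 a hR ?_
      apply (mul_eq_zero.1 (?_ : P.eval a * _ = 0)).resolve_left hPa
      linear_combination hw + (derivative P).eval a * hR
    · refine h2 (P.eval a / (P.eval a - Q.eval a)) (div_ne_zero hPa hR) ?_ a ?_ ?_
      · intro h
        rw [div_eq_one_iff_eq hR] at h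
        exact hQa (by linear_combination h)
      · field_simp
        ring
      · field_simp
        linear_combination -hw
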